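/- Let G be a weighted graph with terminal set K of size k, fix a terminal v_k ∈ K, and let 𝒰 be the collection of nonempty subsets U ⊆ K with v_k ∉ U. If X ⊆ 𝒰 is a family with A(X) ≠ ∅, then X is upward closed within 𝒰: for all P ∈ X and Q ∈ 𝒰 with P ⊆ Q, one has Q ∈ X. -/

import Mathlib

open scoped Classical

/-- A weighted graph with a distinguished embedded set of terminals indexed by `κ`:
a finite vertex type `V`, an embedding `ι : κ ↪ V` of the terminals, and a symmetric
nonnegative capacity function `c` on pairs of vertices. -/
structure WeightedGraph (κ : Type) where
  V : Type
  [fintypeV : Fintype V]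
  ι : κ ↪ V
  c : V → V → ℝ
  symm : ∀ u v, c u v = c v u
  nonneg : ∀ u v, 0 ≤ c u v

namespace WeightedGraph

variable {κ : Type}

instance (G : WeightedGraph κ) : Fintype G.V := G.fintypeV

/-- The cut function `h_G(A) = Σ_{u ∈ A, v ∉ A} c(u,v)`. -/
noncomputable def cutval (G : WeightedGraph κ) (A : Finset G.V) : ℝ :=
  ∑ u ∈ A, ∑ v ∈ Aᶜ, G.c u v

/-- The vertex sets realizing the terminal partition `(U, K \ U)`. -/
noncomputable def cutSets (G : WeightedGraph κ) (U : Finset κ) : Finset (Finset G.V) :=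
  Finset.univ.filter fun A => ∀ x : κ, G.ι x ∈ A ↔ x ∈ U

theorem cutSets_nonempty (G : WeightedGraph κ) (U : Finset κ) : (G.cutSets U).Nonempty := by
  refine ⟨U.image G.ι, ?_⟩
  simp [cutSets, Finset.mem_image, G.ι.injective.eq_iff]

/-- The terminal cut function `h_K^G(U) = min { h_G(A) : A ∩ K = U }`. -/
noncomputable def termCut (G : WeightedGraph κ) (U : Finset κ) : ℝ :=
  (G.cutSets U).inf' (G.cutSets_nonempty U) G.cutval

/-- `H` is a mimicking network for `(G, K)`: all minimum terminal cut values agree. -/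
def IsMimicking (G H : WeightedGraph κ) : Prop :=
  ∀ U : Finset κ, H.termCut U = G.termCut U

/-- `H` is a quotient (contraction) of `G` along the surjection `f`: terminals map to
terminals, and capacities between distinct classes are sums of the original capacities. -/
def IsQuotient (G H : WeightedGraph κ) (f : G.V → H.V) : Prop :=
  Function.Surjective f ∧ (∀ x : κ, f (G.ι x) = H.ι x) ∧
    ∀ y z : H.V, y ≠ z →
      H.c y z = ∑ u ∈ Finset.univ.filter (fun u => f u = y),
        ∑ v ∈ Finset.univ.filter (fun v => f v = z), G.c u v

end WeightedGraph

/-- `A` is a minimum-cardinality minimizer realizing the minimum terminal cut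
`h_K^G(U)`: it induces the terminal partition `(U, K \ U)`, achieves the minimum cut
value, and has minimum cardinality among all such minimizers. -/
def WeightedGraph.IsMinCutSet {κ : Type} (G : WeightedGraph κ) (U : Finset κ)
    (A : Finset G.V) : Prop :=
  (∀ x : κ, G.ι x ∈ A ↔ x ∈ U) ∧ G.cutval A = G.termCut U ∧
    ∀ B : Finset G.V, (∀ x : κ, G.ι x ∈ B ↔ x ∈ U) → G.cutval B = G.termCut U →
      A.card ≤ B.card

/-- `𝒰`: the collection of nonempty subsets `U ⊆ K` not containing the fixed
terminal `t` (= `v_k`). -/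
noncomputable def terminalSubsets (κ : Type) [Fintype κ] (t : κ) : Finset (Finset κ) :=
  Finset.univ.filter fun U : Finset κ => U.Nonempty ∧ t ∉ U

/-- `A(X) = (∩_{Z ∈ X} S(Z)) ∩ (∩_{W ∈ 𝒰 \ X} (V \ S(W)))`, the cluster of vertices
lying inside `S(Z)` exactly for the members `Z` of the family `X ⊆ 𝒰`. -/
noncomputable def region {κ : Type} [Fintype κ] (G : WeightedGraph κ) (t : κ)
    (S : Finset κ → Finset G.V) (X : Finset (Finset κ)) : Finset G.V :=
  Finset.univ.filter fun v : G.V =>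
    (∀ Z ∈ X, v ∈ S Z) ∧ ∀ W ∈ terminalSubsets κ t \ X, v ∉ S W

/-!
If `A` and `B` are minimum cuts for terminal sets `P ⊆ Q`, then `A ∩ B` and `A ∪ B` are again
feasible for `P` and `Q`, so submodularity of the cut function makes `A ∩ B` a minimum cut for `P`.
When `A` has minimum cardinality this forces `A ∩ B = A`, i.e. `A ⊆ B`. Hence `S` is monotone on
`𝒰`, and since a vertex of `A(X)` lies in `S(U)` exactly when `U ∈ X`, membership in `X` passes
from `P` to `Q`.
-/

section CutPairs

variable {α : Type*} [Fintype α] [DecidableEq α]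

/-- The ordered pairs leaving `A`, i.e. the directed edge boundary of `A` in the complete digraph.
Summing capacities over it gives the cut function. -/
def cutPairs (A : Finset α) : Finset (α × α) :=
  A ×ˢ Aᶜ

theorem mem_cutPairs {A : Finset α} {p : α × α} : p ∈ cutPairs A ↔ p.1 ∈ A ∧ p.2 ∉ A := by
  simp only [cutPairs, Finset.mem_product, Finset.mem_compl]

theorem cutPairs_inter_union_cutPairs_union_subset (A B : Finset α) :
    cutPairs (A ∩ B) ∪ cutPairs (A ∪ B) ⊆ cutPairs A ∪ cutPairs B := by
  intro p
  simp only [Finset.mem_union, mem_cutPairs, Finset.mem_inter]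
  tauto

theorem cutPairs_inter_inter_cutPairs_union (A B : Finset α) :
    cutPairs (A ∩ B) ∩ cutPairs (A ∪ B) = cutPairs A ∩ cutPairs B := by
  ext p
  simp only [Finset.mem_union, mem_cutPairs, Finset.mem_inter]
  tauto

theorem sum_cutPairs_inter_add_sum_cutPairs_union_le {M : Type*} [AddCommMonoid M]
    [PartialOrder M] [IsOrderedAddMonoid M] {w : α × α → M} (hw : ∀ p, 0 ≤ w p)
    (A B : Finset α) :
    ∑ p ∈ cutPairs (A ∩ B), w p + ∑ p ∈ cutPairs (A ∪ B), w p ≤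
      ∑ p ∈ cutPairs A, w p + ∑ p ∈ cutPairs B, w p := by
  rw [← Finset.sum_union_inter, ← Finset.sum_union_inter (s₁ := cutPairs A),
    cutPairs_inter_inter_cutPairs_union]
  gcongr ?_ + _
  exact Finset.sum_le_sum_of_subset_of_nonneg (cutPairs_inter_union_cutPairs_union_subset A B)
    fun p _ _ => hw p

end CutPairs

namespace WeightedGraph

variable {κ : Type} {G : WeightedGraph κ} {P Q U : Finset κ} {A B : Finset G.V}

theorem cutval_eq_sum_cutPairs (G : WeightedGraph κ) (A : Finset G.V) :
    G.cutval A = ∑ p ∈ cutPairs A, G.c p.1 p.2 :=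
  (Finset.sum_product' A Aᶜ G.c).symm

theorem cutval_inter_add_cutval_union_le (G : WeightedGraph κ) (A B : Finset G.V) :
    G.cutval (A ∩ B) + G.cutval (A ∪ B) ≤ G.cutval A + G.cutval B := by
  simp only [cutval_eq_sum_cutPairs]
  exact sum_cutPairs_inter_add_sum_cutPairs_union_le (fun p => G.nonneg p.1 p.2) A B

theorem mem_cutSets : A ∈ G.cutSets U ↔ ∀ x, G.ι x ∈ A ↔ x ∈ U := by
  simp only [cutSets, Finset.mem_filter_univ]

theorem inter_mem_cutSets (hA : A ∈ G.cutSets P) (hB : B ∈ G.cutSets Q) :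
    A ∩ B ∈ G.cutSets (P ∩ Q) := by
  rw [mem_cutSets] at hA hB ⊢
  simp only [Finset.mem_inter, hA, hB, implies_true]

theorem union_mem_cutSets (hA : A ∈ G.cutSets P) (hB : B ∈ G.cutSets Q) :
    A ∪ B ∈ G.cutSets (P ∪ Q) := by
  rw [mem_cutSets] at hA hB ⊢
  simp only [Finset.mem_union, hA, hB, implies_true]

theorem termCut_le_cutval (hA : A ∈ G.cutSets U) : G.termCut U ≤ G.cutval A :=
  Finset.inf'_le G.cutval hA

theorem cutval_inter_eq_termCut (hPQ : P ⊆ Q)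
    (hA : A ∈ G.cutSets P) (hAmin : G.cutval A = G.termCut P)
    (hB : B ∈ G.cutSets Q) (hBmin : G.cutval B = G.termCut Q) :
    G.cutval (A ∩ B) = G.termCut P := by
  have hinter : G.termCut P ≤ G.cutval (A ∩ B) := by
    simpa only [Finset.inter_eq_left.mpr hPQ] using termCut_le_cutval (inter_mem_cutSets hA hB)
  have hunion : G.termCut Q ≤ G.cutval (A ∪ B) := by
    simpa only [Finset.union_eq_right.mpr hPQ] using termCut_le_cutval (union_mem_cutSets hA hB)
  have hsubmod := G.cutval_inter_add_cutval_union_le A B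
  linarith

theorem IsMinCutSet.subset (hA : G.IsMinCutSet P A) (hPQ : P ⊆ Q)
    (hB : B ∈ G.cutSets Q) (hBmin : G.cutval B = G.termCut Q) : A ⊆ B := by
  obtain ⟨hAP, hAmin, hAcard⟩ := hA
  have hAmem : A ∈ G.cutSets P := mem_cutSets.mpr hAP
  have hinter : A ∩ B ∈ G.cutSets P := by
    simpa only [Finset.inter_eq_left.mpr hPQ] using inter_mem_cutSets hAmem hB
  have hcard : A.card ≤ (A ∩ B).card :=
    hAcard _ (mem_cutSets.mp hinter) (cutval_inter_eq_termCut hPQ hAmem hAmin hB hBmin)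
  exact Finset.inter_eq_left.mp (Finset.eq_of_subset_of_card_le Finset.inter_subset_left hcard)

theorem mem_iff_of_mem_region [Fintype κ] {t : κ} {S : Finset κ → Finset G.V}
    {X : Finset (Finset κ)} {v : G.V} (hv : v ∈ region G t S X)
    (hU : U ∈ terminalSubsets κ t) : v ∈ S U ↔ U ∈ X := by
  obtain ⟨hin, hout⟩ := Finset.mem_filter_univ v |>.mp hv
  exact ⟨fun hvU => by_contra fun hUX => hout U (Finset.mem_sdiff.mpr ⟨hU, hUX⟩) hvU, hin U⟩

end WeightedGraph

/-- if `A(X) ≠ ∅` then the family `X ⊆ 𝒰` is upward closed within `𝒰`. -/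
theorem region_nonempty_upward_closed {κ : Type} [Fintype κ] (G : WeightedGraph κ)
    (t : κ) (S : Finset κ → Finset G.V)
    (hS : ∀ U ∈ terminalSubsets κ t, G.IsMinCutSet U (S U))
    (X : Finset (Finset κ)) (hX : X ⊆ terminalSubsets κ t)
    (hne : (region G t S X).Nonempty) :
    ∀ P ∈ X, ∀ Q ∈ terminalSubsets κ t, P ⊆ Q → Q ∈ X := by
  intro P hP Q hQ hPQ
  obtain ⟨v, hv⟩ := hne
  obtain ⟨hSQ, hSQmin, -⟩ := hS Q hQ
  have hsub : S P ⊆ S Q :=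
    (hS P (hX hP)).subset hPQ (WeightedGraph.mem_cutSets.mpr hSQ) hSQmin
  have hvP : v ∈ S P := (WeightedGraph.mem_iff_of_mem_region hv (hX hP)).mpr hP
  exact (WeightedGraph.mem_iff_of_mem_region hv hQ).mp (hsub hvP)
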